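/- arXiv:2008.04990 — 2 statements merged into one kernel-verified Lean document; each statement's English description precedes it below -/
import Mathlib

section
/- ‖Q⋆ − T_φ^μ Q⋆‖_∞ ≤ 2 ε_φ, where ε_φ := min_{g ∈ G_φ} ‖g − Q⋆‖_∞ is the best sup-norm approximation error of Q⋆ by functions piecewise constant with respect to the aggregation φ. -/
/-!
If `g` is constant on the cells of `φ`, then any two values of `h` on a common cell differ by at
most `2 ‖g - h‖`. Averaging over a cell is a convex combination, so it stays in the closed ball of
radius `2 ‖g - h‖` around each value of `h` on that cell. At a fixed point of the Bellman operator,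
the projected operator is such an average of the fixed point itself.
-/

/-- `V_f(s) := max_a f(s,a)`. -/
noncomputable def Vof {S A : Type*} [Fintype A] [Nonempty A]
    (f : S × A → ℝ) (s : S) : ℝ :=
  Finset.univ.sup' Finset.univ_nonempty (fun a => f (s, a))

/-- The Bellman optimality operator `(T f)(s,a) = R(s,a) + γ ∑ s', P(s'|s,a) V_f(s')`. -/
noncomputable def bellmanT {S A : Type*} [Fintype S] [Fintype A] [Nonempty A]
    (P : S → A → S → ℝ) (R : S → A → ℝ) (γ : ℝ) (f : S × A → ℝ) : S × A → ℝ :=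
  fun q => R q.1 q.2 + γ * ∑ s', P q.1 q.2 s' * Vof f s'

/-- The projected Bellman operator `T_φ^μ`, which averages `T f` over each
aggregation cell with weights proportional to `μ`. -/
noncomputable def projT {S A X : Type*} [Fintype S] [Fintype A] [Nonempty A]
    [DecidableEq X]
    (P : S → A → S → ℝ) (R : S → A → ℝ) (γ : ℝ)
    (μ : S × A → ℝ) (φ : S × A → X) (f : S × A → ℝ) : S × A → ℝ :=
  fun q => (∑ q', if φ q' = φ q then μ q' * bellmanT P R γ f q' else 0)
         / (∑ q', if φ q' = φ q then μ q' else 0)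

/-- `‖f‖_∞ = max_{s,a} |f(s,a)|`. -/
noncomputable def supNorm {S A : Type*} [Fintype S] [Fintype A] [Nonempty S] [Nonempty A]
    (f : S × A → ℝ) : ℝ :=
  Finset.univ.sup' Finset.univ_nonempty (fun q => |f q|)

/-- A function is piecewise constant with respect to an aggregation `φ` if it is
constant on each aggregation cell; `G_φ` is the class of such functions. -/
def PiecewiseConst {S A X : Type*} (φ : S × A → X) (g : S × A → ℝ) : Prop :=
  ∀ q q' : S × A, φ q = φ q' → g q = g q'

section CellAverage

variable {ι X E : Type*} [SeminormedAddCommGroup E]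

theorem dist_centerMass_le [NormedSpace ℝ E] {t : Finset ι} {w : ι → ℝ} {z : ι → E} {x : E}
    {r : ℝ} (hw : ∀ i ∈ t, 0 ≤ w i) (hpos : 0 < ∑ i ∈ t, w i)
    (hz : ∀ i ∈ t, dist (z i) x ≤ r) : dist (t.centerMass w z) x ≤ r :=
  (convex_closedBall x r).centerMass_mem hw hpos hz

variable [Fintype ι]

theorem dist_le_two_mul_norm_sub_of_factorsThrough {φ : ι → X} {g : ι → E}
    (hg : g.FactorsThrough φ) (h : ι → E) {i j : ι} (hij : φ i = φ j) :
    dist (h i) (h j) ≤ 2 * ‖g - h‖ := by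
  have dist_g_h_le (k : ι) : dist (g k) (h k) ≤ ‖g - h‖ := by
    rw [dist_eq_norm]
    exact norm_le_pi_norm (g - h) k
  calc
    dist (h i) (h j) ≤ dist (g i) (h i) + dist (g i) (h j) := dist_triangle_left _ _ _
    _ = dist (g i) (h i) + dist (g j) (h j) := by rw [hg hij]
    _ ≤ ‖g - h‖ + ‖g - h‖ := add_le_add (dist_g_h_le i) (dist_g_h_le j)
    _ = 2 * ‖g - h‖ := (two_mul _).symm

variable [NormedSpace ℝ E] [DecidableEq X]

/-- The projection of `h` onto the functions constant on the cells (fibres) of `φ`: its value at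
`i` is the average of `h`, with weights `w`, over the cell containing `i`. As for
`Finset.centerMass`, it is `0` on cells of total weight `0`. -/
noncomputable def cellAverage (w : ι → ℝ) (φ : ι → X) (h : ι → E) : ι → E :=
  fun i => Finset.centerMass {j | φ j = φ i} w h

theorem norm_sub_cellAverage_le {w : ι → ℝ} {φ : ι → X} {g : ι → E}
    (hw : ∀ i, 0 ≤ w i) (hcell : ∀ i, 0 < ∑ j with φ j = φ i, w j)
    (hg : g.FactorsThrough φ) (h : ι → E) :
    ‖h - cellAverage w φ h‖ ≤ 2 * ‖g - h‖ := by
  refine (pi_norm_le_iff_of_nonneg (by positivity)).mpr fun i => ?_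
  rw [Pi.sub_apply, ← dist_eq_norm, dist_comm]
  refine dist_centerMass_le (fun j _ => hw j) (hcell i) fun j hj => ?_
  exact dist_le_two_mul_norm_sub_of_factorsThrough hg h (Finset.mem_filter_univ j |>.mp hj)

end CellAverage

section Aggregation

variable {S A X : Type*} [Fintype S] [Fintype A] [Nonempty A]

theorem supNorm_eq_norm [Nonempty S] (f : S × A → ℝ) : supNorm f = ‖f‖ :=
  eq_of_forall_ge_iff fun r => by
    simp only [supNorm, Finset.sup'_le_iff, Finset.mem_univ, true_imp_iff,
      pi_norm_le_iff_of_nonempty, Real.norm_eq_abs]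

variable [DecidableEq X] (P : S → A → S → ℝ) (R : S → A → ℝ) (γ : ℝ)

theorem projT_eq_cellAverage (μ : S × A → ℝ) (φ : S × A → X) (f : S × A → ℝ) :
    projT P R γ μ φ f = cellAverage μ φ (bellmanT P R γ f) := by
  funext q
  simp only [projT, cellAverage, Finset.centerMass, Finset.sum_filter, smul_eq_mul,
    div_eq_inv_mul]

theorem stmt7_general [Nonempty S] {μ : S × A → ℝ} {φ : S × A → X} {g : S × A → ℝ}
    (hμ : ∀ q, 0 ≤ μ q) (hcell : ∀ q, 0 < ∑ q' with φ q' = φ q, μ q')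
    (hg : PiecewiseConst φ g) (f : S × A → ℝ) :
    supNorm (fun q => bellmanT P R γ f q - projT P R γ μ φ f q) ≤
      2 * supNorm (fun q => g q - bellmanT P R γ f q) := by
  rw [supNorm_eq_norm, supNorm_eq_norm, projT_eq_cellAverage]
  exact norm_sub_cellAverage_le hμ hcell hg (bellmanT P R γ f)

end Aggregation

/-- `‖Q⋆ − T_φ^μ Q⋆‖_∞ ≤ 2 ε_φ`, where
`ε_φ = min_{g ∈ G_φ} ‖g − Q⋆‖_∞` is the best sup-norm approximation error of `Q⋆`
by functions piecewise constant with respect to `φ`. -/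
theorem stmt7 {S A X : Type*} [Fintype S] [Fintype A] [Nonempty S] [Nonempty A]
    [DecidableEq X]
    (P : S → A → S → ℝ) (R : S → A → ℝ) (Rmax γ : ℝ)
    (hP0 : ∀ s a s', 0 ≤ P s a s') (hP1 : ∀ s a, ∑ s', P s a s' = 1)
    (hR : ∀ s a, 0 ≤ R s a ∧ R s a ≤ Rmax)
    (hγ0 : 0 ≤ γ) (hγ1 : γ < 1)
    (μ : S × A → ℝ) (hμpos : ∀ q, 0 < μ q) (hμsum : ∑ q, μ q = 1)
    (φ : S × A → X)
    (Qstar : S × A → ℝ) (hQstar : bellmanT P R γ Qstar = Qstar)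
    (εφ : ℝ)
    (hεφ : IsLeast {e : ℝ | ∃ g : S × A → ℝ, PiecewiseConst φ g ∧
              supNorm (fun q => g q - Qstar q) = e} εφ) :
    supNorm (fun q => Qstar q - projT P R γ μ φ Qstar q) ≤ 2 * εφ := by
  obtain ⟨⟨g, hg, rfl⟩, -⟩ := hεφ
  have hcell (q : S × A) : 0 < ∑ q' with φ q' = φ q, μ q' :=
    Finset.sum_pos (fun q' _ => hμpos q') ⟨q, Finset.mem_filter_univ q |>.mpr rfl⟩
  simpa only [hQstar] using stmt7_general P R γ (fun q => (hμpos q).le) hcell hg Qstar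
end

section
/- Let (X, Y) be a random pair with X taking values in a measurable space 𝒳 and 0 ≤ Y ≤ V almost surely. Let H be a class of measurable functions 𝒳 → [0, V] that contains the regression function h⋆ (i.e., h⋆ ∘ X is a version of E[Y | σ(X)]). Suppose there is a finite subset H' ⊆ H of cardinality N that is an ε₀-cover of H under the sup norm: for every h ∈ H there exists h' ∈ H' with sup_x |h(x) − h'(x)| ≤ ε₀. Let ((X₁, Y₁), …, (Xₙ, Yₙ)) be i.i.d. copies of (X, Y), and let ĥ be any measurable empirical risk minimizer, i.e., ĥ takes values in H and \sum_{i=1}^n (ĥ(Xᵢ) − Yᵢ)² ≤ \sum_{i=1}^n (h(Xᵢ) − Yᵢ)² for all h ∈ H. Then with probability at least 1 − δ, E_X[(ĥ(X) − h⋆(X))²] ≤ 22 V² log(N/δ) / (3n) + 8 V ε₀, where E_X denotes expectation over a fresh draw of X with ĥ fixed. -/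
/-!
Write `V = b - a` for the length of an interval `[a, b]` containing the labels and the predictions.
The excess loss `Z = (g(X) - Y)² - (h⋆(X) - Y)²` of a fixed `g` has mean
`R = E (g(X) - h⋆(X))²`, because `Y - h⋆(X)` is orthogonal to functions of `X`, and second moment
at most `2 V² R`. Its variance being controlled by its mean, a Bernstein-type Chernoff bound shows
that the empirical sum of `Z` is below `n R / 2 - 3 V² L` with probability at most `exp (-L)`. A
union bound makes this uniform over the finite cover. An empirical risk minimizer has nonpositive
empirical excess loss, and passing to a nearby element of the cover and back perturbs both the
empirical and the population square loss by at most `2 V ε` per point.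
-/

open MeasureTheory

section Pointwise

/-- The excess square loss of the prediction `u` over the reference prediction `v` at the
label `y`. For `u = h(X)`, `v = h⋆(X)` and `y = Y` its mean is the excess risk of `h`. -/
def excessSqLoss (u v y : ℝ) : ℝ := (u - y) ^ 2 - (v - y) ^ 2

lemma excessSqLoss_eq (u v y : ℝ) :
    excessSqLoss u v y = (u - v) ^ 2 + -2 * (u - v) * (y - v) := by
  unfold excessSqLoss
  ring

variable {a b u v w y ε : ℝ}

lemma sq_sub_le_of_mem_Icc (hu : u ∈ Set.Icc a b) (hv : v ∈ Set.Icc a b) :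
    (u - v) ^ 2 ≤ (b - a) ^ 2 :=
  sq_le_sq' (by linarith [hu.1, hv.2]) (by linarith [hu.2, hv.1])

lemma abs_excessSqLoss_le (hu : u ∈ Set.Icc a b) (hv : v ∈ Set.Icc a b) (hy : y ∈ Set.Icc a b) :
    |excessSqLoss u v y| ≤ (b - a) ^ 2 :=
  abs_sub_le_of_nonneg_of_le (sq_nonneg _) (sq_sub_le_of_mem_Icc hu hy)
    (sq_nonneg _) (sq_sub_le_of_mem_Icc hv hy)

/-- The second summand is linear in `y - v`, so it disappears when `v` is the conditional mean
of `y`. -/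
lemma sq_excessSqLoss_le (hu : u ∈ Set.Icc a b) (hv : v ∈ Set.Icc a b) (hy : y ∈ Set.Icc a b) :
    excessSqLoss u v y ^ 2 ≤
      2 * (b - a) ^ 2 * (u - v) ^ 2 + 4 * (u - v) ^ 2 * (a + b - u - v) * (y - v) := by
  have hyv : (y - v) ^ 2 ≤ (a + b - 2 * v) * (y - v) + (b - a) ^ 2 / 4 := by
    nlinarith [mul_nonneg (sub_nonneg.2 hy.1) (sub_nonneg.2 hy.2), sq_nonneg (a + b - 2 * v)]
  calc excessSqLoss u v y ^ 2
      = (u - v) ^ 2 * (u - v) ^ 2 - 4 * (u - v) ^ 3 * (y - v)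
          + 4 * (u - v) ^ 2 * (y - v) ^ 2 := by rw [excessSqLoss_eq]; ring
    _ ≤ (b - a) ^ 2 * (u - v) ^ 2 - 4 * (u - v) ^ 3 * (y - v)
          + 4 * (u - v) ^ 2 * ((a + b - 2 * v) * (y - v) + (b - a) ^ 2 / 4) := by
        gcongr ?_ * _ - _ + 4 * (u - v) ^ 2 * ?_
        exact sq_sub_le_of_mem_Icc hu hv
    _ = 2 * (b - a) ^ 2 * (u - v) ^ 2 + 4 * (u - v) ^ 2 * (a + b - u - v) * (y - v) := by ring

lemma sq_sub_le_sq_sub_add (hu : u ∈ Set.Icc a b) (hv : v ∈ Set.Icc a b) (hw : w ∈ Set.Icc a b)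
    (huv : |u - v| ≤ ε) : (u - w) ^ 2 ≤ (v - w) ^ 2 + 2 * (b - a) * ε := by
  have hsum : |u + v - 2 * w| ≤ 2 * (b - a) :=
    abs_le.2 ⟨by linarith [hu.1, hv.1, hw.2], by linarith [hu.2, hv.2, hw.1]⟩
  calc (u - w) ^ 2 = (v - w) ^ 2 + (u + v - 2 * w) * (u - v) := by ring
    _ ≤ (v - w) ^ 2 + |u + v - 2 * w| * |u - v| := by
        rw [← abs_mul]
        gcongr
        exact le_abs_self _
    _ ≤ (v - w) ^ 2 + 2 * (b - a) * ε := by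
        gcongr
        exact (abs_nonneg _).trans hsum

lemma sum_excessSqLoss_le_of_abs_sub_le {ι : Type*} [Fintype ι] {f g s y : ι → ℝ}
    (hf : ∀ i, f i ∈ Set.Icc a b) (hg : ∀ i, g i ∈ Set.Icc a b) (hy : ∀ i, y i ∈ Set.Icc a b)
    (hfg : ∀ i, |f i - g i| ≤ ε) (hle : ∑ i, (f i - y i) ^ 2 ≤ ∑ i, (s i - y i) ^ 2) :
    ∑ i, excessSqLoss (g i) (s i) (y i) ≤ Fintype.card ι * (2 * (b - a) * ε) := by
  have hgf : ∑ i, (g i - y i) ^ 2 ≤ ∑ i, ((f i - y i) ^ 2 + 2 * (b - a) * ε) :=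
    Finset.sum_le_sum fun i _ =>
      sq_sub_le_sq_sub_add (hg i) (hf i) (hy i) (abs_sub_comm (f i) (g i) ▸ hfg i)
  simp only [excessSqLoss, Finset.sum_sub_distrib]
  simp only [Finset.sum_add_distrib, Finset.sum_const, Finset.card_univ, nsmul_eq_mul] at hgf
  linarith

end Pointwise

section Chernoff

open ProbabilityTheory

lemma exp_le_one_add_add_three_quarters_mul_sq {u : ℝ} (hu : |u| ≤ 1) :
    Real.exp u ≤ 1 + u + 3 / 4 * u ^ 2 := by
  have htaylor : |Real.exp u - (1 + u + u ^ 2 / 2)| ≤ |u| ^ 3 * (2 / 9) := by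
    have h := Real.exp_bound hu (n := 3) (by norm_num)
    norm_num [Finset.sum_range_succ, Nat.factorial] at h
    exact h
  have hcube : |u| ^ 3 ≤ u ^ 2 := by
    rw [← sq_abs u]
    exact pow_le_pow_of_le_one (abs_nonneg u) hu (by norm_num)
  linarith [(abs_le.1 htaylor).2, sq_nonneg u]

variable {Ω : Type*} [MeasurableSpace Ω] {μ : Measure Ω} [IsProbabilityMeasure μ] {B : ℝ}

lemma mgf_le_exp_of_abs_le {Z : Ω → ℝ} {t : ℝ} (hZ : AEMeasurable Z μ)
    (hZB : ∀ᵐ ω ∂μ, |Z ω| ≤ B) (ht : |t| * B ≤ 1) :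
    mgf Z μ t ≤ Real.exp (t * ∫ ω, Z ω ∂μ + 3 / 4 * t ^ 2 * ∫ ω, Z ω ^ 2 ∂μ) := by
  have hZ_int : Integrable Z μ := .of_bound hZ.aestronglyMeasurable B hZB
  have hZ2_int : Integrable (fun ω => Z ω ^ 2) μ := by
    refine .of_bound (hZ.pow_const 2).aestronglyMeasurable (B ^ 2) ?_
    filter_upwards [hZB] with ω hω
    rw [norm_pow, Real.norm_eq_abs]
    gcongr
  have hlin_int : Integrable (fun ω => 1 + t * Z ω) μ :=
    (integrable_const 1).add (hZ_int.const_mul t)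
  have hquad_int : Integrable (fun ω => 3 / 4 * t ^ 2 * Z ω ^ 2) μ := hZ2_int.const_mul _
  calc mgf Z μ t ≤ ∫ ω, (1 + t * Z ω + 3 / 4 * t ^ 2 * Z ω ^ 2) ∂μ := by
        refine integral_mono_of_nonneg (.of_forall fun ω => (Real.exp_pos _).le)
          (hlin_int.add hquad_int) ?_
        filter_upwards [hZB] with ω hω
        have htZ : |t * Z ω| ≤ 1 := by
          rw [abs_mul]
          exact (mul_le_mul_of_nonneg_left hω (abs_nonneg t)).trans ht
        simpa only [mul_pow, mul_assoc] using exp_le_one_add_add_three_quarters_mul_sq htZ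
    _ = t * ∫ ω, Z ω ∂μ + 3 / 4 * t ^ 2 * ∫ ω, Z ω ^ 2 ∂μ + 1 := by
        rw [integral_add hlin_int hquad_int, integral_add (integrable_const 1)
          (hZ_int.const_mul t), integral_const_mul, integral_const_mul, integral_const,
          probReal_univ, one_smul]
        ring
    _ ≤ Real.exp (t * ∫ ω, Z ω ∂μ + 3 / 4 * t ^ 2 * ∫ ω, Z ω ^ 2 ∂μ) := Real.add_one_le_exp _

lemma mgf_le_exp_half_integral {Z : Ω → ℝ} {t : ℝ} (hZ : AEMeasurable Z μ)
    (hZB : ∀ᵐ ω ∂μ, |Z ω| ≤ B) (hvar : ∫ ω, Z ω ^ 2 ∂μ ≤ 2 * B * ∫ ω, Z ω ∂μ)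
    (ht : t ≤ 0) (htB : t * B = -1 / 3) :
    mgf Z μ t ≤ Real.exp (t * (1 / 2 * ∫ ω, Z ω ∂μ)) := by
  refine (mgf_le_exp_of_abs_le hZ hZB (by rw [abs_of_nonpos ht]; linarith)).trans
    (Real.exp_le_exp.2 ?_)
  calc t * ∫ ω, Z ω ∂μ + 3 / 4 * t ^ 2 * ∫ ω, Z ω ^ 2 ∂μ
      ≤ t * ∫ ω, Z ω ∂μ + 3 / 4 * t ^ 2 * (2 * B * ∫ ω, Z ω ∂μ) := by gcongr
    _ = t * (1 / 2 * ∫ ω, Z ω ∂μ) := by linear_combination (3 / 2 * t * ∫ ω, Z ω ∂μ) * htB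

variable {ι : Type*} [Fintype ι] {Z : ι → Ω → ℝ}

/-- Chernoff's bound at `t = -1 / (3 B)`, where the quadratic term of `mgf_le_exp_of_abs_le` costs
exactly half of the mean. -/
lemma measureReal_sum_le_half_sum_integral_sub_le (hB : 0 < B) (hindep : iIndepFun Z μ)
    (hZ : ∀ i, Measurable (Z i)) (hZB : ∀ i, ∀ᵐ ω ∂μ, |Z i ω| ≤ B)
    (hvar : ∀ i, ∫ ω, Z i ω ^ 2 ∂μ ≤ 2 * B * ∫ ω, Z i ω ∂μ) (L : ℝ) :
    μ.real {ω | ∑ i, Z i ω ≤ 1 / 2 * ∑ i, ∫ ω, Z i ω ∂μ - 3 * B * L} ≤ Real.exp (-L) := by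
  obtain ⟨t, htB, ht⟩ : ∃ t : ℝ, t * B = -1 / 3 ∧ t ≤ 0 :=
    ⟨-1 / 3 / B, by field_simp, div_nonpos_of_nonpos_of_nonneg (by norm_num) hB.le⟩
  have hmgf (i : ι) : mgf (Z i) μ t ≤ Real.exp (t * (1 / 2 * ∫ ω, Z i ω ∂μ)) :=
    mgf_le_exp_half_integral (hZ i).aemeasurable (hZB i) (hvar i) ht htB
  have hexp_int (i : ι) : Integrable (fun ω => Real.exp (t * Z i ω)) μ := by
    refine integrable_exp_mul_of_mem_Icc (a := -B) (b := B) (hZ i).aemeasurable ?_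
    filter_upwards [hZB i] with ω hω using abs_le.1 hω
  have hchernoff := measure_le_le_exp_mul_mgf (1 / 2 * ∑ i, ∫ ω, Z i ω ∂μ - 3 * B * L) ht
    (hindep.integrable_exp_mul_sum hZ (s := Finset.univ) fun i _ => hexp_int i)
  simp only [Finset.sum_apply] at hchernoff
  refine hchernoff.trans ?_
  calc _ ≤ Real.exp (-t * (1 / 2 * ∑ i, ∫ ω, Z i ω ∂μ - 3 * B * L)) *
        ∏ i, Real.exp (t * (1 / 2 * ∫ ω, Z i ω ∂μ)) := by
        rw [hindep.mgf_sum hZ]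
        gcongr with i
        · exact fun i _ => mgf_nonneg
        · exact hmgf i
    _ = Real.exp (-L) := by
        rw [← Real.exp_sum, ← Real.exp_add, ← Finset.mul_sum, ← Finset.mul_sum]
        congr 1
        linear_combination 3 * L * htB

lemma measureReal_pi_sum_le_half_integral_sub_le {Z : Ω → ℝ} (hB : 0 < B) (hZ : Measurable Z)
    (hZB : ∀ᵐ ω ∂μ, |Z ω| ≤ B) (hvar : ∫ ω, Z ω ^ 2 ∂μ ≤ 2 * B * ∫ ω, Z ω ∂μ) (L : ℝ) :
    (Measure.pi fun _ : ι => μ).real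
      {D | ∑ i, Z (D i) ≤ Fintype.card ι / 2 * ∫ ω, Z ω ∂μ - 3 * B * L} ≤ Real.exp (-L) := by
  have hmean (i : ι) := integral_comp_eval (μ := fun _ : ι => μ) (i := i) hZ.aestronglyMeasurable
  have hsq (i : ι) := integral_comp_eval (μ := fun _ : ι => μ) (i := i)
    (hZ.pow_const 2).aestronglyMeasurable
  have hchernoff := measureReal_sum_le_half_sum_integral_sub_le (μ := Measure.pi fun _ : ι => μ)
    hB (iIndepFun_pi fun _ => hZ.aemeasurable) (fun i => hZ.comp (measurable_pi_apply i))
    (fun i => (measurePreserving_eval (fun _ : ι => μ) i).quasiMeasurePreserving.ae hZB)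
    (fun i => by rwa [hmean, hsq]) L
  simp only [hmean, Finset.sum_const, Finset.card_univ, nsmul_eq_mul] at hchernoff
  convert hchernoff using 5
  ring

end Chernoff

section Moments

variable {Ω : Type*} {m m₀ : MeasurableSpace Ω} {μ : Measure Ω} {a b : ℝ} {g s Y : Ω → ℝ}

lemma integrable_sq_sub_of_mem_Icc [IsFiniteMeasure μ] (hg : AEStronglyMeasurable g μ)
    (hs : AEStronglyMeasurable s μ) (hgI : ∀ᵐ ω ∂μ, g ω ∈ Set.Icc a b)
    (hsI : ∀ᵐ ω ∂μ, s ω ∈ Set.Icc a b) :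
    Integrable (fun ω => (g ω - s ω) ^ 2) μ := by
  refine .of_bound ((hg.sub hs).pow 2) ((b - a) ^ 2) ?_
  filter_upwards [hgI, hsI] with ω hgω hsω
  rw [Real.norm_of_nonneg (sq_nonneg _)]
  exact sq_sub_le_of_mem_Icc hgω hsω

lemma integral_sq_sub_le_add_of_abs_sub_le [IsProbabilityMeasure μ] {f : Ω → ℝ} {ε : ℝ}
    (hf : AEStronglyMeasurable f μ) (hg : AEStronglyMeasurable g μ)
    (hs : AEStronglyMeasurable s μ) (hfI : ∀ᵐ ω ∂μ, f ω ∈ Set.Icc a b)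
    (hgI : ∀ᵐ ω ∂μ, g ω ∈ Set.Icc a b) (hsI : ∀ᵐ ω ∂μ, s ω ∈ Set.Icc a b)
    (hfg : ∀ᵐ ω ∂μ, |f ω - g ω| ≤ ε) :
    ∫ ω, (f ω - s ω) ^ 2 ∂μ ≤ ∫ ω, (g ω - s ω) ^ 2 ∂μ + 2 * (b - a) * ε := by
  have hgs_int := integrable_sq_sub_of_mem_Icc hg hs hgI hsI
  calc ∫ ω, (f ω - s ω) ^ 2 ∂μ ≤ ∫ ω, ((g ω - s ω) ^ 2 + 2 * (b - a) * ε) ∂μ := by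
        refine integral_mono_ae (integrable_sq_sub_of_mem_Icc hf hs hfI hsI)
          (hgs_int.add (integrable_const _)) ?_
        filter_upwards [hfI, hgI, hsI, hfg] with ω hfω hgω hsω hfgω
          using sq_sub_le_sq_sub_add hfω hgω hsω hfgω
    _ = ∫ ω, (g ω - s ω) ^ 2 ∂μ + 2 * (b - a) * ε := by
        rw [integral_add hgs_int (integrable_const _), integral_const, probReal_univ, one_smul]

lemma integrable_mul_sub_of_ae_eq_condExp (hm : m ≤ m₀) {k : Ω → ℝ} {C : ℝ}
    (hk : StronglyMeasurable[m] k) (hkC : ∀ᵐ ω ∂μ, |k ω| ≤ C) (hY : Integrable Y μ)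
    (hs : s =ᵐ[μ] μ[Y | m]) : Integrable (fun ω => k ω * (Y ω - s ω)) μ :=
  (hY.sub (integrable_condExp.congr hs.symm)).bdd_mul (hk.mono hm).aestronglyMeasurable hkC

variable [IsFiniteMeasure μ]

lemma integral_mul_sub_eq_zero_of_ae_eq_condExp (hm : m ≤ m₀) {k : Ω → ℝ} {C : ℝ}
    (hk : StronglyMeasurable[m] k) (hkC : ∀ᵐ ω ∂μ, |k ω| ≤ C) (hY : Integrable Y μ)
    (hs : s =ᵐ[μ] μ[Y | m]) : ∫ ω, k ω * (Y ω - s ω) ∂μ = 0 := by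
  have hs_int : Integrable s μ := integrable_condExp.congr hs.symm
  have hres : μ[Y - s | m] =ᵐ[μ] 0 := by
    filter_upwards [condExp_sub hY hs_int m, condExp_congr_ae (m := m) hs,
      condExp_condExp_of_le (f := Y) le_rfl hm] with ω hsub hcongr hidem
    rw [hsub, Pi.sub_apply, hcongr, hidem, sub_self, Pi.zero_apply]
  have hpull : μ[k * (Y - s) | m] =ᵐ[μ] k * μ[Y - s | m] :=
    condExp_mul_of_stronglyMeasurable_left hk
      (integrable_mul_sub_of_ae_eq_condExp hm hk hkC hY hs) (hY.sub hs_int)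
  calc ∫ ω, k ω * (Y ω - s ω) ∂μ = ∫ ω, (μ[k * (Y - s) | m]) ω ∂μ := (integral_condExp hm).symm
    _ = ∫ _, 0 ∂μ := by
        refine integral_congr_ae ?_
        filter_upwards [hpull, hres] with ω hω hresω
        rw [hω, Pi.mul_apply, hresω, Pi.zero_apply, mul_zero]
    _ = 0 := integral_zero _ _

lemma integral_excessSqLoss (hm : m ≤ m₀) (hg : StronglyMeasurable[m] g)
    (hs : StronglyMeasurable[m] s) (hY : AEStronglyMeasurable Y μ)
    (hgI : ∀ᵐ ω ∂μ, g ω ∈ Set.Icc a b) (hsI : ∀ᵐ ω ∂μ, s ω ∈ Set.Icc a b)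
    (hYI : ∀ᵐ ω ∂μ, Y ω ∈ Set.Icc a b) (hce : s =ᵐ[μ] μ[Y | m]) :
    ∫ ω, excessSqLoss (g ω) (s ω) (Y ω) ∂μ = ∫ ω, (g ω - s ω) ^ 2 ∂μ := by
  have hk : StronglyMeasurable[m] fun ω => -2 * (g ω - s ω) := (hg.sub hs).const_mul _
  have hkC : ∀ᵐ ω ∂μ, |-2 * (g ω - s ω)| ≤ 2 * (b - a) := by
    filter_upwards [hgI, hsI] with ω hgω hsω
    rw [abs_mul, abs_neg, abs_two]
    gcongr
    exact Real.dist_le_of_mem_Icc hgω hsω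
  have hY_int : Integrable Y μ := .of_mem_Icc a b hY.aemeasurable hYI
  simp only [excessSqLoss_eq]
  rw [integral_add (integrable_sq_sub_of_mem_Icc (hg.mono hm).aestronglyMeasurable
      (hs.mono hm).aestronglyMeasurable hgI hsI)
    (integrable_mul_sub_of_ae_eq_condExp hm hk hkC hY_int hce),
    integral_mul_sub_eq_zero_of_ae_eq_condExp hm hk hkC hY_int hce, add_zero]

lemma integral_sq_excessSqLoss_le (hm : m ≤ m₀) (hg : StronglyMeasurable[m] g)
    (hs : StronglyMeasurable[m] s) (hY : AEStronglyMeasurable Y μ)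
    (hgI : ∀ᵐ ω ∂μ, g ω ∈ Set.Icc a b) (hsI : ∀ᵐ ω ∂μ, s ω ∈ Set.Icc a b)
    (hYI : ∀ᵐ ω ∂μ, Y ω ∈ Set.Icc a b) (hce : s =ᵐ[μ] μ[Y | m]) :
    ∫ ω, excessSqLoss (g ω) (s ω) (Y ω) ^ 2 ∂μ ≤
      2 * (b - a) ^ 2 * ∫ ω, (g ω - s ω) ^ 2 ∂μ := by
  have hk : StronglyMeasurable[m] fun ω => 4 * (g ω - s ω) ^ 2 * (a + b - g ω - s ω) :=
    (((hg.sub hs).pow 2).const_mul 4).mul ((stronglyMeasurable_const.sub hg).sub hs)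
  have hkC : ∀ᵐ ω ∂μ, |4 * (g ω - s ω) ^ 2 * (a + b - g ω - s ω)| ≤
      4 * (b - a) ^ 2 * (b - a) := by
    filter_upwards [hgI, hsI] with ω hgω hsω
    rw [abs_mul, abs_of_nonneg (by positivity : 0 ≤ 4 * (g ω - s ω) ^ 2)]
    gcongr 4 * ?_ * ?_
    · exact sq_sub_le_of_mem_Icc hgω hsω
    · exact abs_le.2 ⟨by linarith [hgω.2, hsω.2], by linarith [hgω.1, hsω.1]⟩
  have hY_int : Integrable Y μ := .of_mem_Icc a b hY.aemeasurable hYI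
  have hsq_int := (integrable_sq_sub_of_mem_Icc (hg.mono hm).aestronglyMeasurable
    (hs.mono hm).aestronglyMeasurable hgI hsI).const_mul (2 * (b - a) ^ 2)
  have hlin_int := integrable_mul_sub_of_ae_eq_condExp hm hk hkC hY_int hce
  calc ∫ ω, excessSqLoss (g ω) (s ω) (Y ω) ^ 2 ∂μ
      ≤ ∫ ω, (2 * (b - a) ^ 2 * (g ω - s ω) ^ 2 +
          4 * (g ω - s ω) ^ 2 * (a + b - g ω - s ω) * (Y ω - s ω)) ∂μ := by
        refine integral_mono_of_nonneg (.of_forall fun ω => sq_nonneg _)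
          (hsq_int.add hlin_int) ?_
        filter_upwards [hgI, hsI, hYI] with ω hgω hsω hYω using sq_excessSqLoss_le hgω hsω hYω
    _ = 2 * (b - a) ^ 2 * ∫ ω, (g ω - s ω) ^ 2 ∂μ := by
        rw [integral_add hsq_int hlin_int, integral_const_mul,
          integral_mul_sub_eq_zero_of_ae_eq_condExp hm hk hkC hY_int hce, add_zero]

end Moments

section Generalization

variable {𝓧 ι : Type*} [MeasurableSpace 𝓧] [Fintype ι] {ρ : Measure (𝓧 × ℝ)}
  [IsProbabilityMeasure ρ] {a b δ : ℝ} {s : 𝓧 → ℝ}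

lemma measureReal_pi_sum_excessSqLoss_le (hab : a < b) (hY : ∀ᵐ p ∂ρ, p.2 ∈ Set.Icc a b)
    (hs : Measurable s) (hsI : ∀ x, s x ∈ Set.Icc a b)
    (hce : (fun p : 𝓧 × ℝ => s p.1) =ᵐ[ρ]
      ρ[(fun p : 𝓧 × ℝ => p.2) | MeasurableSpace.comap Prod.fst ‹MeasurableSpace 𝓧›])
    {g : 𝓧 → ℝ} (hg : Measurable g) (hgI : ∀ x, g x ∈ Set.Icc a b) (L : ℝ) :
    (Measure.pi fun _ : ι => ρ).real
      {D | ∑ i, excessSqLoss (g (D i).1) (s (D i).1) (D i).2 ≤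
        Fintype.card ι / 2 * ∫ p, (g p.1 - s p.1) ^ 2 ∂ρ - 3 * (b - a) ^ 2 * L} ≤
      Real.exp (-L) := by
  have hZ : Measurable fun p : 𝓧 × ℝ => excessSqLoss (g p.1) (s p.1) p.2 := by
    unfold excessSqLoss
    fun_prop
  have hZB : ∀ᵐ p ∂ρ, |excessSqLoss (g p.1) (s p.1) p.2| ≤ (b - a) ^ 2 := by
    filter_upwards [hY] with p hp using abs_excessSqLoss_le (hgI p.1) (hsI p.1) hp
  have hm : MeasurableSpace.comap Prod.fst ‹MeasurableSpace 𝓧› ≤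
      (inferInstance : MeasurableSpace (𝓧 × ℝ)) := measurable_fst.comap_le
  have hgm := (hg.comp (comap_measurable (Prod.fst : 𝓧 × ℝ → 𝓧))).stronglyMeasurable
  have hsm := (hs.comp (comap_measurable (Prod.fst : 𝓧 × ℝ → 𝓧))).stronglyMeasurable
  have hgI' : ∀ᵐ p ∂ρ, g p.1 ∈ Set.Icc a b := .of_forall fun p => hgI p.1
  have hsI' : ∀ᵐ p ∂ρ, s p.1 ∈ Set.Icc a b := .of_forall fun p => hsI p.1
  have hmean : ∫ p, excessSqLoss (g p.1) (s p.1) p.2 ∂ρ = ∫ p, (g p.1 - s p.1) ^ 2 ∂ρ :=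
    integral_excessSqLoss hm hgm hsm measurable_snd.aestronglyMeasurable hgI' hsI' hY hce
  have hvar : ∫ p, excessSqLoss (g p.1) (s p.1) p.2 ^ 2 ∂ρ ≤
      2 * (b - a) ^ 2 * ∫ p, (g p.1 - s p.1) ^ 2 ∂ρ :=
    integral_sq_excessSqLoss_le hm hgm hsm measurable_snd.aestronglyMeasurable hgI' hsI' hY hce
  rw [← hmean] at hvar ⊢
  exact measureReal_pi_sum_le_half_integral_sub_le (pow_pos (sub_pos.2 hab) 2) hZ hZB hvar L

lemma measure_pi_exists_sum_excessSqLoss_le (hab : a < b) (hY : ∀ᵐ p ∂ρ, p.2 ∈ Set.Icc a b)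
    (hs : Measurable s) (hsI : ∀ x, s x ∈ Set.Icc a b)
    (hce : (fun p : 𝓧 × ℝ => s p.1) =ᵐ[ρ]
      ρ[(fun p : 𝓧 × ℝ => p.2) | MeasurableSpace.comap Prod.fst ‹MeasurableSpace 𝓧›])
    {C : Set (𝓧 → ℝ)} (hCfin : C.Finite) (hC : ∀ g ∈ C, Measurable g)
    (hCI : ∀ g ∈ C, ∀ x, g x ∈ Set.Icc a b) (hδ : 0 < δ) :
    (Measure.pi fun _ : ι => ρ)
      {D | ∃ g ∈ C, ∑ i, excessSqLoss (g (D i).1) (s (D i).1) (D i).2 ≤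
        Fintype.card ι / 2 * ∫ p, (g p.1 - s p.1) ^ 2 ∂ρ
          - 3 * (b - a) ^ 2 * Real.log (Nat.card C / δ)} ≤ ENNReal.ofReal δ := by
  let bad (g : 𝓧 → ℝ) : Set (ι → 𝓧 × ℝ) :=
    {D | ∑ i, excessSqLoss (g (D i).1) (s (D i).1) (D i).2 ≤
      Fintype.card ι / 2 * ∫ p, (g p.1 - s p.1) ^ 2 ∂ρ
        - 3 * (b - a) ^ 2 * Real.log (Nat.card C / δ)}
  have hcard : Nat.card C = hCfin.toFinset.card := by
    rw [Nat.card_coe_set_eq, Set.ncard_eq_toFinset_card C hCfin]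
  have hbad : ∀ g ∈ hCfin.toFinset,
      (Measure.pi fun _ : ι => ρ) (bad g) ≤ ENNReal.ofReal (δ / Nat.card C) := by
    intro g hg
    have hpos : (0 : ℝ) < Nat.card C := by
      rw [hcard]
      exact_mod_cast Finset.card_pos.2 ⟨g, hg⟩
    have hgC := hCfin.mem_toFinset.1 hg
    have htail := measureReal_pi_sum_excessSqLoss_le (ι := ι) hab hY hs hsI hce (hC g hgC)
      (hCI g hgC) (Real.log (Nat.card C / δ))
    rw [Real.exp_neg, Real.exp_log (by positivity), inv_div] at htail
    rw [← ofReal_measureReal]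
    exact ENNReal.ofReal_le_ofReal htail
  calc (Measure.pi fun _ : ι => ρ) {D | ∃ g ∈ C, D ∈ bad g}
      ≤ (Measure.pi fun _ : ι => ρ) (⋃ g ∈ hCfin.toFinset, bad g) :=
        measure_mono fun D ⟨g, hg, hD⟩ => Set.mem_biUnion (hCfin.mem_toFinset.2 hg) hD
    _ ≤ ∑ g ∈ hCfin.toFinset, (Measure.pi fun _ : ι => ρ) (bad g) :=
        measure_biUnion_finset_le _ _
    _ ≤ hCfin.toFinset.card • ENNReal.ofReal (δ / Nat.card C) :=
        Finset.sum_le_card_nsmul _ _ _ hbad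
    _ ≤ ENNReal.ofReal δ := by
        rw [← ENNReal.ofReal_nsmul, nsmul_eq_mul, ← hcard, mul_div_left_comm]
        exact ENNReal.ofReal_le_ofReal (mul_le_of_le_one_right hδ.le (div_self_le_one _))

lemma log_natCard_div_nonneg {α : Type*} {C : Set α} (hCfin : C.Finite) (hC : C.Nonempty)
    (hδ : 0 < δ) (hδ1 : δ ≤ 1) : 0 ≤ Real.log (Nat.card C / δ) := by
  have hcard : 1 ≤ Nat.card C := Nat.card_coe_set_eq C ▸ (Set.ncard_pos hCfin).2 hC
  exact Real.log_nonneg ((one_le_div hδ).2 (hδ1.trans (mod_cast hcard)))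

theorem stmt9_general [Nonempty ι] (hab : a < b) (hY : ∀ᵐ p ∂ρ, p.2 ∈ Set.Icc a b)
    (hs : Measurable s) (hsI : ∀ x, s x ∈ Set.Icc a b)
    (hce : (fun p : 𝓧 × ℝ => s p.1) =ᵐ[ρ]
      ρ[(fun p : 𝓧 × ℝ => p.2) | MeasurableSpace.comap Prod.fst ‹MeasurableSpace 𝓧›])
    {C : Set (𝓧 → ℝ)} (hCfin : C.Finite) (hC : ∀ g ∈ C, Measurable g)
    (hCI : ∀ g ∈ C, ∀ x, g x ∈ Set.Icc a b) (hδ : 0 < δ) {ε : ℝ}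
    {f : (ι → 𝓧 × ℝ) → 𝓧 → ℝ} (hf : ∀ D, Measurable (f D)) (hfI : ∀ D x, f D x ∈ Set.Icc a b)
    (hcover : ∀ D, ∃ g ∈ C, ∀ x, |f D x - g x| ≤ ε)
    (hemp : ∀ D : ι → 𝓧 × ℝ,
      ∑ i, (f D (D i).1 - (D i).2) ^ 2 ≤ ∑ i, (s (D i).1 - (D i).2) ^ 2) :
    ENNReal.ofReal (1 - δ) ≤ (Measure.pi fun _ : ι => ρ)
      {D | ∫ p, (f D p.1 - s p.1) ^ 2 ∂ρ ≤
        6 * (b - a) ^ 2 * Real.log (Nat.card C / δ) / Fintype.card ι + 6 * (b - a) * ε} := by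
  set L := Real.log (Nat.card C / δ)
  have hlabels : ∀ᵐ D ∂Measure.pi fun _ : ι => ρ, ∀ i, (D i).2 ∈ Set.Icc a b :=
    ae_all_iff.2 fun i =>
      (measurePreserving_eval (fun _ : ι => ρ) i).quasiMeasurePreserving.ae hY
  rw [ENNReal.ofReal_sub 1 hδ.le, ENNReal.ofReal_one, tsub_le_iff_right,
    ← measure_univ (μ := Measure.pi fun _ : ι => ρ)]
  refine (measure_univ_le_add_compl _).trans (add_le_add_right ((measure_mono_ae ?_).trans
    (measure_pi_exists_sum_excessSqLoss_le hab hY hs hsI hce hCfin hC hCI hδ)) _)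
  filter_upwards [hlabels] with D hD hrisk
  obtain ⟨g, hgC, hfg⟩ := hcover D
  refine ⟨g, hgC, ?_⟩
  have hempirical := sum_excessSqLoss_le_of_abs_sub_le (fun i => hfI D (D i).1)
    (fun i => hCI g hgC (D i).1) hD (fun i => hfg (D i).1) (hemp D)
  have hpopulation : ∫ p, (f D p.1 - s p.1) ^ 2 ∂ρ ≤
      ∫ p, (g p.1 - s p.1) ^ 2 ∂ρ + 2 * (b - a) * ε :=
    integral_sq_sub_le_add_of_abs_sub_le ((hf D).comp measurable_fst).aestronglyMeasurable
      ((hC g hgC).comp measurable_fst).aestronglyMeasurable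
      (hs.comp measurable_fst).aestronglyMeasurable (.of_forall fun p => hfI D p.1)
      (.of_forall fun p => hCI g hgC p.1) (.of_forall fun p => hsI p.1)
      (.of_forall fun p => hfg p.1)
  have hlarge : 6 * (b - a) ^ 2 * L / Fintype.card ι <
      ∫ p, (g p.1 - s p.1) ^ 2 ∂ρ - 4 * (b - a) * ε := by
    linarith [not_le.1 (show ¬(_ : ℝ) ≤ _ from hrisk)]
  rw [div_lt_iff₀ (by exact_mod_cast Fintype.card_pos)] at hlarge
  linarith

end Generalization

/-- (Least-squares generalization error bound.)  Let `ρ` be the joint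
law of `(X, Y)` with `0 ≤ Y ≤ V` a.s., `H` a class of measurable `[0,V]`-valued
functions containing the regression function `h⋆`, and `H' ⊆ H` a finite `ε₀`-cover
of `H` of cardinality `N` under the sup norm.  If `ĥ` is an empirical risk minimizer
over `H` computed from `n` i.i.d. samples, then with probability at least `1 − δ`
over the samples,
`E_X[(ĥ(X) − h⋆(X))²] ≤ 22 V² log(N/δ)/(3n) + 8 V ε₀`. -/
theorem stmt9 {𝓧 : Type*} [MeasurableSpace 𝓧]
    (ρ : Measure (𝓧 × ℝ)) [IsProbabilityMeasure ρ]
    (V : ℝ) (hV : 0 < V)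
    (hYb : ∀ᵐ p ∂ρ, 0 ≤ p.2 ∧ p.2 ≤ V)
    (H : Set (𝓧 → ℝ))
    (hHmeas : ∀ h ∈ H, Measurable h)
    (hHb : ∀ h ∈ H, ∀ x, 0 ≤ h x ∧ h x ≤ V)
    (hstar : 𝓧 → ℝ) (hstarH : hstar ∈ H)
    -- `h⋆ ∘ X` is a version of the conditional expectation `E[Y | σ(X)]`
    (hce : (fun p : 𝓧 × ℝ => hstar p.1) =ᵐ[ρ]
      ρ[(fun p : 𝓧 × ℝ => p.2) | MeasurableSpace.comap Prod.fst ‹MeasurableSpace 𝓧›])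
    -- `H'` is a finite `ε₀`-cover of `H` of cardinality `N` under the sup norm
    (H' : Set (𝓧 → ℝ)) (hH'sub : H' ⊆ H) (hH'fin : H'.Finite)
    (N : ℕ) (hN : Nat.card H' = N)
    (ε₀ : ℝ) (hε₀ : 0 ≤ ε₀)
    (hcover : ∀ h ∈ H, ∃ h' ∈ H', ∀ x, |h x - h' x| ≤ ε₀)
    (n : ℕ) (hn : 0 < n)
    (δ : ℝ) (hδ : 0 < δ) (hδ1 : δ < 1)
    -- `ĥ` is an empirical risk minimizer over `H`
    (hhat : (Fin n → 𝓧 × ℝ) → (𝓧 → ℝ))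
    (hhatH : ∀ D, hhat D ∈ H)
    (hERM : ∀ D : Fin n → 𝓧 × ℝ, ∀ h ∈ H,
      ∑ i, (hhat D (D i).1 - (D i).2) ^ 2 ≤ ∑ i, (h (D i).1 - (D i).2) ^ 2) :
    (Measure.pi fun _ : Fin n => ρ)
      {D | ∫ p, (hhat D p.1 - hstar p.1) ^ 2 ∂ρ
            ≤ 22 * V ^ 2 * Real.log (N / δ) / (3 * n) + 8 * V * ε₀}
      ≥ ENNReal.ofReal (1 - δ) := by
  have : Nonempty (Fin n) := ⟨⟨0, hn⟩⟩
  have hlog : 0 ≤ Real.log (N / δ) := by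
    obtain ⟨g, hg, -⟩ := hcover hstar hstarH
    exact hN ▸ log_natCard_div_nonneg hH'fin ⟨g, hg⟩ hδ hδ1.le
  have hgeneral := stmt9_general hV hYb (hHmeas _ hstarH) (hHb _ hstarH) hce hH'fin
    (fun g hg => hHmeas g (hH'sub hg)) (fun g hg => hHb g (hH'sub hg)) hδ
    (fun D => hHmeas _ (hhatH D)) (fun D => hHb _ (hhatH D)) (fun D => hcover _ (hhatH D))
    (fun D => hERM D hstar hstarH)
  rw [hN, Fintype.card_fin, sub_zero] at hgeneral
  refine hgeneral.trans (measure_mono (Set.ofPred_subset_ofPred_of_imp fun D hD => hD.trans ?_))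
  calc 6 * V ^ 2 * Real.log (N / δ) / n + 6 * V * ε₀
      ≤ 22 / 3 * V ^ 2 * Real.log (N / δ) / n + 8 * V * ε₀ := by gcongr <;> norm_num
    _ = 22 * V ^ 2 * Real.log (N / δ) / (3 * n) + 8 * V * ε₀ := by ring
end
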